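/- Let F be a field with char F ≠ 2 and v ∈ F. Then the 2×2×2 spatial matrix A(v) with slices ([[1,0],[0,1]], [[0,v],[1,0]]) is equivalent to A(v') if and only if v' = vz for some nonzero square z ∈ F. -/

import Mathlib

open Polynomial Matrix

/-- Companion matrix of `x² - ux - v`. -/
def Phi {F : Type*} [Field F] (u v : F) : Matrix (Fin 2) (Fin 2) F := !![0, v; 1, u]

/-- Equivalence of two `2×2×2` spatial matrices given by their slice pairs
`(A₁, A₂)` and `(B₁, B₂)`: there exist invertible `R`, `S`, `T` with
`Rᵀ(t₁₁A₁ + t₂₁A₂)S = B₁` and `Rᵀ(t₁₂A₁ + t₂₂A₂)S = B₂`. -/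
def SpEquiv {F : Type*} [Field F] (A₁ A₂ B₁ B₂ : Matrix (Fin 2) (Fin 2) F) : Prop :=
  ∃ R S T : Matrix (Fin 2) (Fin 2) F, IsUnit R ∧ IsUnit S ∧ IsUnit T ∧
    Rᵀ * (T 0 0 • A₁ + T 1 0 • A₂) * S = B₁ ∧
    Rᵀ * (T 0 1 • A₁ + T 1 1 • A₂) * S = B₂

/-- For ,  is equivalent to  iff  for some
nonzero square . -/
theorem Av_equiv_iff {F : Type*} [Field F] (hF : ringChar F ≠ 2) (v v' : F) :
    SpEquiv (1 : Matrix (Fin 2) (Fin 2) F) (Phi 0 v) 1 (Phi 0 v') ↔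
      ∃ z : F, z ≠ 0 ∧ (∃ a : F, z = a ^ 2) ∧ v' = v * z := by
  have h2 : (2 : F) ≠ 0 := Ring.two_ne_zero hF
  constructor
  · rintro ⟨R, S, T, hR, hS, hT, h1, h3⟩
    have e1 := congrArg Matrix.det h1
    have e2 := congrArg Matrix.det h3
    have h4 : Rᵀ * ((T 0 0 • 1 + T 1 0 • Phi 0 v) + (T 0 1 • 1 + T 1 1 • Phi 0 v)) * S
        = 1 + Phi 0 v' := by
      rw [Matrix.mul_add, Matrix.add_mul, h1, h3]
    have e3 := congrArg Matrix.det h4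
    rw [Matrix.isUnit_iff_isUnit_det, isUnit_iff_ne_zero] at hR hS hT
    rw [Matrix.det_mul, Matrix.det_mul, Matrix.det_transpose] at e1 e2 e3
    refine ⟨(R.det * S.det * T.det) ^ 2, pow_ne_zero _ (mul_ne_zero (mul_ne_zero hR hS) hT),
      ⟨_, rfl⟩, ?_⟩
    rw [Matrix.det_fin_two T]
    generalize R.det = r at *
    generalize S.det = s at *
    simp [Matrix.det_fin_two, Phi] at e1 e2 e3
    generalize T 0 0 = a at *
    generalize T 0 1 = b at *
    generalize T 1 0 = c at *
    generalize T 1 1 = d at *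
    have f1 : r * s * (a ^ 2 - v * c ^ 2) = 1 := by linear_combination e1
    have f2 : r * s * (b ^ 2 - v * d ^ 2) = -v' := by linear_combination e2
    have f3 : r * s * (a * b - v * c * d) = 0 := by
      apply mul_left_cancel₀ h2
      linear_combination e3 - e1 - e2
    linear_combination (r * s * (b ^ 2 - v * d ^ 2)) * f1 + f2 -
      (r * s * (a * b - v * c * d)) * f3
  · rintro ⟨z, hz, ⟨a, rfl⟩, rfl⟩
    have ha : a ≠ 0 := by
      rintro rfl
      simp at hz
    refine ⟨!![1, 0; 0, a⁻¹], !![1, 0; 0, a], !![1, 0; 0, a], ?_, ?_, ?_, ?_, ?_⟩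
    · simp [Matrix.isUnit_iff_isUnit_det, Matrix.det_fin_two, ha]
    · simp [Matrix.isUnit_iff_isUnit_det, Matrix.det_fin_two, ha]
    · simp [Matrix.isUnit_iff_isUnit_det, Matrix.det_fin_two, ha]
    · ext i j
      fin_cases i <;> fin_cases j <;> simp [Matrix.mul_apply, Fin.sum_univ_two, ha]
    · ext i j
      fin_cases i <;> fin_cases j <;> simp [Matrix.mul_apply, Fin.sum_univ_two, Phi, ha]
      ring
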